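/- Let λ > 0 and N∘ ∈ ℕ. There exists an even function Φ∘ ∈ C_c^∞(ℝ) such that Φ∘(s) = 1 for |s| ≤ 1/2, Φ∘(s) = 0 for |s| ≥ 1, and ∫_0^∞ ϱ^λ (d/dϱ)^j Φ̂∘(ϱ) dϱ = 0 for every integer j with 0 ≤ j ≤ N∘ and j ≠ λ. -/

import Mathlib

open MeasureTheory Filter
open scoped ENNReal NNReal RealInnerProductSpace BigOperators Topology

noncomputable section

/-- `ℝ^d` as a Euclidean space. -/
abbrev Euc (d : ℕ) : Type := EuclideanSpace ℝ (Fin d)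

/-- The geometric setup: `Ω` is a bounded open convex subset of `ℝ^d` containing the origin,
`ρ` is its Minkowski functional, which is assumed to be smooth away from the origin and
positive away from the origin. -/
structure IsMinkowskiGauge (d : ℕ) (Ω : Set (Euc d)) (ρ : Euc d → ℝ) : Prop where
  isOpen : IsOpen Ω
  convex : Convex ℝ Ω
  isBounded : Bornology.IsBounded Ω
  zero_mem : (0 : Euc d) ∈ Ω
  eq_gauge : ρ = gauge Ω
  smooth : ContDiffOn ℝ (⊤ : ℕ∞) ρ {(0 : Euc d)}ᶜ
  pos : ∀ ξ : Euc d, ξ ≠ 0 → 0 < ρ ξ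

/-- Everywhere nonvanishing Gaussian curvature of `∂Ω = {ρ = 1}`: for every `ξ ≠ 0`
the Hessian of `ρ` at `ξ` has rank `d - 1`. -/
def HasNonvanishingCurvature (d : ℕ) (ρ : Euc d → ℝ) : Prop :=
  ∀ ξ : Euc d, ξ ≠ 0 →
    LinearMap.rank ((fderiv ℝ (fderiv ℝ ρ) ξ : Euc d →L[ℝ] (Euc d →L[ℝ] ℝ)) :
      Euc d →ₗ[ℝ] (Euc d →L[ℝ] ℝ)) = (d - 1 : ℕ)

/-- The Fourier transform `f̂(ξ) = ∫ f(y) e^{−i⟨y,ξ⟩} dy` on `ℝ^d`. -/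
def FTd {d : ℕ} (f : Euc d → ℂ) (ξ : Euc d) : ℂ :=
  ∫ y : Euc d, f y * Complex.exp (-(Complex.I * (⟪y, ξ⟫ : ℂ)))

/-- The Riesz mean `R^λ_{a,t} f(x) = (2π)^{-d} ∫ (1 - ρ(ξ)^a/t^a)_+^λ f̂(ξ) e^{i⟨x,ξ⟩} dξ`. -/
def RieszMean {d : ℕ} (ρ : Euc d → ℝ) (a lam t : ℝ) (f : Euc d → ℂ) (x : Euc d) : ℂ :=
  (((2 * Real.pi) ^ d)⁻¹ : ℝ) •
    ∫ ξ : Euc d, ((max (1 - ρ ξ ^ a / t ^ a) 0) ^ lam : ℝ) •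
      (FTd f ξ * Complex.exp (Complex.I * (⟪x, ξ⟫ : ℂ)))

/-- The critical index `λ(p) = d(1/p - 1/2) - 1/2`. -/
def criticalIndex (d : ℕ) (p : ℝ) : ℝ := (d : ℝ) * (1 / p - 1 / 2) - 1 / 2

/-- One-dimensional Fourier transform `φ̂(ϱ) = ∫ φ(s) e^{-isϱ} ds`. -/
def FT1 (φ : ℝ → ℂ) (ϱ : ℝ) : ℂ :=
  ∫ s : ℝ, φ s * Complex.exp (-(Complex.I * (s : ℂ) * (ϱ : ℂ)))

/-- One-dimensional Fourier transform of a real-valued function. -/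
def FT1R (Φ : ℝ → ℝ) : ℝ → ℂ := FT1 (fun s => (Φ s : ℂ))

/-- The pieces `h_{λ,ℓ}` of the decomposition of the Riesz multiplier. -/
def hfun (χ Φ Ψ : ℝ → ℝ) (lam : ℝ) : ℕ → ℝ → ℂ
  | 0 => fun ϱ => ((2 * Real.pi)⁻¹ * χ ϱ : ℝ) •
      ∫ u : ℝ, ((max (1 - u) 0) ^ lam : ℝ) • FT1R Φ (ϱ - u)
  | (ℓ + 1) => fun ϱ => ((2 * Real.pi)⁻¹ * χ ϱ : ℝ) •
      ∫ u : ℝ, ((max (1 - u) 0) ^ lam : ℝ) •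
        (((2 : ℝ) ^ ℓ) • FT1R Ψ ((2 : ℝ) ^ ℓ * (ϱ - u)))

/-- The data entering the construction of `h_{λ,ℓ}`: a cutoff `χ ∈ C_c^∞((1/2,2))`, an even
`Φ = Φ∘ ∈ C_c^∞(ℝ)` with `Φ∘ = 1` on `[-1/2,1/2]`, `supp Φ∘ ⊆ [-1,1]`, satisfying the moment
cancellation conditions, and `Ψ(x) = Φ∘(x/2) - Φ∘(x)`. -/
structure HData (lam : ℝ) (N0 : ℕ) (χ Φ Ψ : ℝ → ℝ) : Prop where
  hχsm : ContDiff ℝ (⊤ : ℕ∞) χ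
  hχsupp : Function.support χ ⊆ Set.Ioo (1/2 : ℝ) 2
  hΦsm : ContDiff ℝ (⊤ : ℕ∞) Φ
  hΦeven : ∀ s, Φ (-s) = Φ s
  hΦone : ∀ s : ℝ, |s| ≤ 1/2 → Φ s = 1
  hΦzero : ∀ s : ℝ, 1 ≤ |s| → Φ s = 0
  hΦcanc : ∀ j : ℕ, j ≤ N0 → (j : ℝ) ≠ lam →
    (∫ ϱ in Set.Ioi (0 : ℝ), ((ϱ ^ lam : ℝ) : ℂ) * iteratedDeriv j (FT1R Φ) ϱ) = 0
  hΨ : Ψ = fun x => Φ (x / 2) - Φ x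

/-- Inverse Fourier transform on `ℝ^d`. -/
def invFTd {d : ℕ} (m : Euc d → ℂ) (x : Euc d) : ℂ :=
  (((2 * Real.pi) ^ d)⁻¹ : ℝ) •
    ∫ ξ : Euc d, m ξ * Complex.exp (Complex.I * (⟪x, ξ⟫ : ℂ))

/-- The Fourier multiplier operator `m(D) f = (𝓕⁻¹ m) * f`. -/
def mulOp {d : ℕ} (m : Euc d → ℂ) (f : Euc d → ℂ) (x : Euc d) : ℂ :=
  ∫ y : Euc d, invFTd m (x - y) * f y

/-- The Hardy–Littlewood maximal function. -/
def HLMaximal {d : ℕ} (w : Euc d → ℝ) (x : Euc d) : ℝ≥0∞ :=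
  ⨆ r : {r : ℝ // 0 < r},
    (volume (Metric.ball x r.1))⁻¹ * ∫⁻ y in Metric.ball x r.1, ENNReal.ofReal (w y)

/-- `w` is an `A₁` weight. -/
structure IsA1Weight {d : ℕ} (w : Euc d → ℝ) : Prop where
  nonneg : ∀ x, 0 ≤ w x
  locInt : LocallyIntegrable w volume
  ne_zero : ¬ (w =ᵐ[(volume : Measure (Euc d))] (0 : Euc d → ℝ))
  maximal_le : ∃ C : ℝ, ∀ᵐ x ∂(volume : Measure (Euc d)),
    HLMaximal w x ≤ ENNReal.ofReal (C * w x)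

/-- `w` satisfies a reverse Hölder inequality with exponent `σ`. -/
def IsRH {d : ℕ} (σ : ℝ) (w : Euc d → ℝ) : Prop :=
  ∃ C : ℝ, ∀ (x : Euc d) (r : ℝ), 0 < r →
    ((volume (Metric.ball x r))⁻¹ *
        ∫⁻ y in Metric.ball x r, ENNReal.ofReal (w y) ^ σ) ^ (1 / σ) ≤
      ENNReal.ofReal C *
        ((volume (Metric.ball x r))⁻¹ * ∫⁻ y in Metric.ball x r, ENNReal.ofReal (w y))

/-- The weighted `L^p(w)` (quasi-)norm. -/
def wLpNorm {d : ℕ} (p : ℝ) (w : Euc d → ℝ) (g : Euc d → ℂ) : ℝ≥0∞ :=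
  (∫⁻ x, (‖g x‖₊ : ℝ≥0∞) ^ p * ENNReal.ofReal (w x)) ^ (1 / p)

/-- The weighted weak `L^{p,∞}(w)` (quasi-)norm. -/
def wWeakNorm {d : ℕ} (p : ℝ) (w : Euc d → ℝ) (g : Euc d → ℂ) : ℝ≥0∞ :=
  ⨆ α : {α : ℝ // 0 < α},
    ENNReal.ofReal α.1 *
      (∫⁻ x in {x : Euc d | α.1 < ‖g x‖}, ENNReal.ofReal (w x)) ^ (1 / p)

/-- A (half-open, axes-parallel) cube `x + [0,s)^d` in `ℝ^d`. -/
def IsCube {d : ℕ} (Q : Set (Euc d)) : Prop :=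
  ∃ (x : Euc d) (s : ℝ), 0 < s ∧ Q = {y : Euc d | ∀ i, y i ∈ Set.Ico (x i) (x i + s)}

/-- The average `⟨f⟩_{Q,p} = (|Q|⁻¹ ∫_Q |f|^p)^{1/p}`. -/
def cubeAvg {d : ℕ} (p : ℝ) (Q : Set (Euc d)) (f : Euc d → ℂ) : ℝ≥0∞ :=
  ((volume Q)⁻¹ * ∫⁻ x in Q, (‖f x‖₊ : ℝ≥0∞) ^ p) ^ (1 / p)

/-- A `γ`-sparse (finite) family of cubes. -/
def IsSparseFamily {d : ℕ} (γ : ℝ) (𝔖 : Finset (Set (Euc d))) : Prop :=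
  (∀ Q ∈ 𝔖, IsCube Q) ∧
  ∃ E : Set (Euc d) → Set (Euc d),
    (∀ Q ∈ 𝔖, MeasurableSet (E Q) ∧ E Q ⊆ Q ∧
      ENNReal.ofReal γ * volume Q ≤ volume (E Q)) ∧
    (𝔖 : Set (Set (Euc d))).Pairwise fun Q Q' => Disjoint (E Q) (E Q')

/-- The maximal sparse form `Λ*_{p,q}(f₁,f₂)` (supremum over `1/2`-sparse families). -/
def sparseFormMax {d : ℕ} (p q : ℝ) (f₁ f₂ : Euc d → ℂ) : ℝ≥0∞ :=
  ⨆ 𝔖 : {𝔖 : Finset (Set (Euc d)) // IsSparseFamily (1/2) 𝔖},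
    ∑ Q ∈ 𝔖.1, volume Q * cubeAvg p Q f₁ * cubeAvg q Q f₂

/-- The sparse bound `T ∈ Sp(p,q)`. -/
def SparseBound {d : ℕ} (p q : ℝ) (T : (Euc d → ℂ) → Euc d → ℂ) : Prop :=
  ∃ C : ℝ, ∀ f₁ f₂ : Euc d → ℂ,
    ContDiff ℝ (⊤ : ℕ∞) f₁ → HasCompactSupport f₁ →
    ContDiff ℝ (⊤ : ℕ∞) f₂ → HasCompactSupport f₂ →
    ENNReal.ofReal ‖∫ x, T f₁ x * f₂ x‖ ≤ ENNReal.ofReal C * sparseFormMax p q f₁ f₂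

/-- The exponent `r_*(p, p∘, r∘)`. -/
def rStar (d : ℕ) (p p0 r0 : ℝ) : ℝ :=
  if p ≤ 2 * ((d : ℝ) + 1) / ((d : ℝ) + 3) then
    (((d : ℝ) + 1) / ((d : ℝ) - 1) * (1 - 1 / p))⁻¹
  else
    ((1 / r0 * (((d : ℝ) + 3) / (2 * ((d : ℝ) + 1)) - 1 / p) +
        1 / 2 * (1 / p - 1 / p0)) /
      (((d : ℝ) + 3) / (2 * ((d : ℝ) + 1)) - 1 / p0))⁻¹

/-- The exponent `q_*(p, p∘, r∘)`, the conjugate of `r_*(p, p∘, r∘)`. -/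
def qStar (d : ℕ) (p p0 r0 : ℝ) : ℝ := (1 - 1 / rStar d p p0 r0)⁻¹

/-- The trapezoid `∏_d(λ)` with corners `P₁, P₂, P₃, P₄`. -/
def trapez (d : ℕ) (lam : ℝ) : Set (ℝ × ℝ) :=
  convexHull ℝ
    {((2*lam + (d:ℝ) + 1)/(2*(d:ℝ)), ((d:ℝ) - 2*lam - 1)/(2*(d:ℝ))),
     ((2*lam + (d:ℝ) + 1)/(2*(d:ℝ)),
       ((d:ℝ) - 1)/(2*(d:ℝ)) + lam*((d:ℝ) + 1)/((d:ℝ)*((d:ℝ) - 1))),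
     (((d:ℝ) - 1)/(2*(d:ℝ)) + lam*((d:ℝ) + 1)/((d:ℝ)*((d:ℝ) - 1)),
       (2*lam + (d:ℝ) + 1)/(2*(d:ℝ))),
     (((d:ℝ) - 2*lam - 1)/(2*(d:ℝ)), (2*lam + (d:ℝ) + 1)/(2*(d:ℝ)))}

/-- A dyadic cube `2^k(m + [0,1)^d)`, recorded by its generation `k` and position `m`. -/
structure DyadicCube (d : ℕ) where
  k : ℤ
  m : Fin d → ℤ
deriving DecidableEq

/-- The subset of `ℝ^d` corresponding to a dyadic cube. -/
def DyadicCube.set {d : ℕ} (Q : DyadicCube d) : Set (Euc d) :=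
  {x : Euc d | ∀ i, x i ∈ Set.Ico ((2:ℝ) ^ Q.k * (Q.m i : ℝ)) ((2:ℝ) ^ Q.k * ((Q.m i : ℝ) + 1))}

/-- `μ(𝔔) = Σ_{Q ∈ 𝔔} |Q|`. -/
def dyadicMeasure {d : ℕ} (𝔔 : Finset (DyadicCube d)) : ℝ≥0∞ :=
  ∑ Q ∈ 𝔔, volume Q.set

/-- The class `𝒴_M` of normalized bump functions. -/
def MemYM (M : ℕ) (χ : ℝ → ℂ) : Prop :=
  ContDiff ℝ (M : ℕ∞) χ ∧ Function.support χ ⊆ Set.Ioo (1/2 : ℝ) 2 ∧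
    ∑ ν ∈ Finset.range (M + 1), (⨆ s : ℝ, ‖iteratedDeriv ν χ s‖) ≤ 1

/-- The function `Σ_{j ≥ 1} 2^{j(d+1)/2} m_j(D)[Σ_{Q ∈ 𝔇_j} f_Q]` appearing in `VBR(p,r)`,
where `m_j(ξ) = χ_j(2^j(1 - ρ(ξ)))`. -/
def vbrSum {d : ℕ} (ρ : Euc d → ℝ) (χ : ℕ → ℝ → ℂ) (𝔉 : Finset (DyadicCube d))
    (f : DyadicCube d → Euc d → ℂ) (x : Euc d) : ℂ :=
  Finset.sum ((𝔉.image (fun Q => Q.k)).filter (fun j => 1 ≤ j)) fun (j : ℤ) =>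
    ((2:ℝ) ^ ((j : ℝ) * ((d : ℝ) + 1) / 2)) •
      mulOp (fun ξ => χ j.toNat ((2:ℝ) ^ j * (1 - ρ ξ)))
        (fun y => ∑ Q ∈ 𝔉.filter (fun Q' => Q'.k = j), f Q y) x

/-- The statement `VBR(p,r)`. -/
def VBR (d : ℕ) (ρ : Euc d → ℝ) (p r : ℝ) : Prop :=
  ∃ (M : ℕ) (C : ℝ), 1 ≤ M ∧
    ∀ χ : ℕ → ℝ → ℂ, (∀ j : ℕ, 1 ≤ j → MemYM M (χ j)) →
    ∀ (𝔉 : Finset (DyadicCube d)) (f : DyadicCube d → Euc d → ℂ),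
      (∀ Q ∈ 𝔉, Function.support (f Q) ⊆ closure Q.set) →
      eLpNorm (vbrSum ρ χ 𝔉 f) (ENNReal.ofReal r) volume ≤
        ENNReal.ofReal C *
          (∑ Q ∈ 𝔉, volume Q.set * eLpNorm (f Q) (ENNReal.ofReal p) volume ^ r) ^ (1 / r)

/-- `Hyp(p∘, r∘)`: `VBR(p,r)` holds for all `p ∈ [2(d+1)/(d+3), p∘)`
and all `r ∈ [p, r_*(p,p∘,r∘))`. -/
def Hyp (d : ℕ) (ρ : Euc d → ℝ) (p0 r0 : ℝ) : Prop :=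
  ∀ p r : ℝ, 2 * ((d : ℝ) + 1) / ((d : ℝ) + 3) ≤ p → p < p0 →
    p ≤ r → r < rStar d p p0 r0 → VBR d ρ p r

/-- The operator `A_{λ,ℓ} = 2^{ℓ(λ + (d+1)/2)} h_{λ,ℓ}(ρ(D))`. -/
def Aop {d : ℕ} (ρ : Euc d → ℝ) (h : ℕ → ℝ → ℂ) (lam : ℝ) (ℓ : ℕ)
    (f : Euc d → ℂ) (x : Euc d) : ℂ :=
  ((2:ℝ) ^ ((ℓ : ℝ) * (lam + ((d : ℝ) + 1) / 2))) • mulOp (fun ξ => h ℓ (ρ ξ)) f x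

/-- `𝒜_{s,𝔔} F = Σ_{ℓ ≥ s} Σ_{Q ∈ 𝔔_{ℓ-s}} A_{λ,ℓ}[F_Q 1_Q]`. -/
def AopSum {d : ℕ} (ρ : Euc d → ℝ) (h : ℕ → ℝ → ℂ) (lam : ℝ) (s : ℕ)
    (𝔔 : Finset (DyadicCube d)) (F : DyadicCube d → Euc d → ℂ) (x : Euc d) : ℂ :=
  ∑ Q ∈ 𝔔, Aop ρ h lam (Q.k.toNat + s) (Q.set.indicator (F Q)) x

/-- `Ξ_{s,𝔔}[F,β] = Σ_{ℓ ≥ s} Σ_{Q ∈ 𝔔_{ℓ-s}} β(Q) A_{λ,ℓ}[F_Q 1_Q]`. -/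
def XiSum {d : ℕ} (ρ : Euc d → ℝ) (h : ℕ → ℝ → ℂ) (lam : ℝ) (s : ℕ)
    (𝔔 : Finset (DyadicCube d)) (F : DyadicCube d → Euc d → ℂ)
    (β : DyadicCube d → ℂ) (x : Euc d) : ℂ :=
  ∑ Q ∈ 𝔔, β Q * Aop ρ h lam (Q.k.toNat + s) (Q.set.indicator (F Q)) x

/-- `‖F‖_{ℓ^∞(L^p)} = sup_{Q ∈ 𝔔} ‖F_Q‖_{L^p}`. -/
def supLp {d : ℕ} (p : ℝ) (𝔔 : Finset (DyadicCube d))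
    (F : DyadicCube d → Euc d → ℂ) : ℝ≥0∞ :=
  ⨆ Q ∈ 𝔔, eLpNorm (F Q) (ENNReal.ofReal p) volume

/-- `‖β‖_{ℓ^{r,1}(μ)} = ∫_0^∞ μ({Q ∈ 𝔔 : |β(Q)| > α})^{1/r} dα`. -/
def lorentzNorm {d : ℕ} (r : ℝ) (𝔔 : Finset (DyadicCube d))
    (β : DyadicCube d → ℂ) : ℝ≥0∞ :=
  ∫⁻ α in Set.Ioi (0:ℝ),
    (∑ Q ∈ 𝔔, if α < ‖β Q‖ then volume Q.set else 0) ^ (1 / r)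

/-!
The moment `∫₀^∞ ϱ^λ (d/dϱ)^j Φ̂(ϱ) dϱ` is a linear functional of `Φ` which is homogeneous of degree
`j - λ` under the dilations `Φ ↦ Φ(·/q)`. If `Φ` is a cutoff function with plateau `[-b, b]` and
`0 < q < 1`, then with `w = q^(j - λ) ≠ 1` the normalized combination `(Φ(·/q) - w Φ) / (1 - w)` is
a cutoff function with plateau `[-qb, qb]`. Its `j`-th moment vanishes, and so do all moments that
already vanished for `Φ`. The moments are thus killed one at a time, starting from a bump function
whose plateau is large enough to survive all the contractions.
-/

open SchwartzMap FourierTransform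

/-- The dilation `f ↦ f (· / q)` of Schwartz functions on `ℝ`. -/
def dilation (E : Type*) [NormedAddCommGroup E] [NormedSpace ℝ E] {q : ℝ} (hq : q ≠ 0) :
    𝓢(ℝ, E) →L[ℝ] 𝓢(ℝ, E) :=
  compCLMOfContinuousLinearEquiv ℝ
    (ContinuousLinearEquiv.unitsEquivAut ℝ (Units.mk0 q⁻¹ (inv_ne_zero hq)))

@[simp]
theorem dilation_apply {E : Type*} [NormedAddCommGroup E] [NormedSpace ℝ E] {q : ℝ} (hq : q ≠ 0)
    (f : 𝓢(ℝ, E)) (s : ℝ) : dilation E hq f s = f (s / q) :=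
  rfl

/-- `Φ` is an even cutoff function with plateau `[-a, a]` and support in `[-1, 1]`. Smoothness is
not included: it is carried by the type `𝓢(ℝ, ℝ)` wherever cutoffs are constructed. -/
structure IsCutoff (a : ℝ) (Φ : ℝ → ℝ) : Prop where
  even : Function.Even Φ
  eq_one : ∀ s, |s| ≤ a → Φ s = 1
  eq_zero : ∀ s, 1 ≤ |s| → Φ s = 0

theorem IsCutoff.hasCompactSupport {a : ℝ} {Φ : ℝ → ℝ} (hΦ : IsCutoff a Φ) :
    HasCompactSupport Φ := by
  refine HasCompactSupport.intro (isCompact_closedBall (0 : ℝ) 1) fun s hs => hΦ.eq_zero s ?_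
  rw [mem_closedBall_zero_iff, Real.norm_eq_abs, not_le] at hs
  exact hs.le

theorem exists_schwartzMap_isCutoff {a : ℝ} (ha : 0 < a) (ha₁ : a < 1) :
    ∃ Φ : 𝓢(ℝ, ℝ), IsCutoff a Φ := by
  let bump : ContDiffBump (0 : ℝ) := ⟨a, 1, ha, ha₁⟩
  refine ⟨bump.hasCompactSupport.toSchwartzMap bump.contDiff,
    bump.neg, fun s hs => ?_, fun s hs => ?_⟩
  · exact bump.one_of_mem_closedBall (by simpa [bump] using hs)
  · exact bump.zero_of_le_dist (by simpa [bump] using hs)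

theorem IsCutoff.smul_dilation_sub {b q w : ℝ} {Φ : 𝓢(ℝ, ℝ)} (hΦ : IsCutoff b Φ)
    (hq : 0 < q) (hq₁ : q ≤ 1) (hw : w ≠ 1) :
    IsCutoff (q * b) ⇑((1 - w)⁻¹ • (dilation ℝ hq.ne' Φ - w • Φ)) where
  even s := by simp [neg_div, hΦ.even _]
  eq_one s hs := by
    have hs_div : |s| / q ≤ b := (div_le_iff₀' hq).2 hs
    have hs_b : |s| ≤ b := (le_div_self (abs_nonneg s) hq hq₁).trans hs_div
    rw [← abs_of_pos hq, ← abs_div] at hs_div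
    simp [hΦ.eq_one _ hs_div, hΦ.eq_one _ hs_b, sub_ne_zero.2 hw.symm]
  eq_zero s hs := by
    have hs_div : 1 ≤ |s / q| := by
      rw [abs_div, abs_of_pos hq, one_le_div₀ hq]
      exact hq₁.trans hs
    simp [hΦ.eq_zero _ hs_div, hΦ.eq_zero _ hs]

/-- Homogeneity of degree `α` under dilations, for a linear map on real Schwartz functions. -/
def IsHomogeneous {M : Type*} [AddCommGroup M] [Module ℝ M] (α : ℝ) (L : 𝓢(ℝ, ℝ) →ₗ[ℝ] M) :
    Prop :=
  ∀ (q : ℝ) (hq : 0 < q) (f : 𝓢(ℝ, ℝ)), L (dilation ℝ hq.ne' f) = q ^ α • L f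

theorem IsHomogeneous.map_smul_dilation_sub {M : Type*} [AddCommGroup M] [Module ℝ M] {α : ℝ}
    {L : 𝓢(ℝ, ℝ) →ₗ[ℝ] M} (hL : IsHomogeneous α L) (c w : ℝ) {q : ℝ} (hq : 0 < q)
    (f : 𝓢(ℝ, ℝ)) :
    L (c • (dilation ℝ hq.ne' f - w • f)) = (c * (q ^ α - w)) • L f := by
  rw [map_smul, map_sub, map_smul, hL q hq, ← sub_smul, smul_smul]

theorem exists_isCutoff_forall_eq_zero {ι M : Type*} [AddCommGroup M] [Module ℝ M]
    (L : ι → 𝓢(ℝ, ℝ) →ₗ[ℝ] M) (α : ι → ℝ) (S : Finset ι) (hL : ∀ i ∈ S, IsHomogeneous (α i) (L i))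
    (hα : ∀ i ∈ S, α i ≠ 0) {a : ℝ} (ha : 0 < a) (ha₁ : a < 1) :
    ∃ Φ : 𝓢(ℝ, ℝ), IsCutoff a Φ ∧ ∀ i ∈ S, L i Φ = 0 := by
  classical
  induction S using Finset.induction_on generalizing a with
  | empty => simpa using exists_schwartzMap_isCutoff ha ha₁
  | insert k S _ ih =>
    rw [Finset.forall_mem_insert] at hL hα
    obtain ⟨b, hab, hb₁⟩ := exists_between ha₁
    have hb : 0 < b := ha.trans hab
    obtain ⟨Φ, hΦ, hΦS⟩ := ih hL.2 hα.2 hb hb₁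
    have hq : 0 < a / b := div_pos ha hb
    have hq₁ : a / b < 1 := (div_lt_one hb).2 hab
    have hw : (a / b) ^ α k ≠ 1 := fun h =>
      hα.1 ((Real.rpow_right_inj hq hq₁.ne).1 (h.trans (Real.rpow_zero _).symm))
    have hcutoff := hΦ.smul_dilation_sub hq hq₁.le hw
    rw [div_mul_cancel₀ a hb.ne'] at hcutoff
    refine ⟨_, hcutoff, (Finset.forall_mem_insert _ _ _).2 ⟨?_, fun i hi => ?_⟩⟩
    · rw [hL.1.map_smul_dilation_sub _ _ hq, sub_self, mul_zero, zero_smul]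
    · rw [(hL.2 i hi).map_smul_dilation_sub _ _ hq, hΦS i hi, smul_zero]

section MellinTransform

variable {E : Type*} [NormedAddCommGroup E] [NormedSpace ℂ E]

theorem mellinConvergent_schwartzMap (f : 𝓢(ℝ, E)) {s : ℂ} (hs : 0 < s.re) :
    MellinConvergent f s := by
  refine mellinConvergent_of_isBigO_rpow (a := s.re + 1) (b := 0)
    (f.continuous.locallyIntegrable.locallyIntegrableOn _)
    (((f.isBigO_cocompact_rpow (-(s.re + 1))).mono atTop_le_cocompact).congr' .rfl ?_)
    (lt_add_one _) ?_ hs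
  · filter_upwards [eventually_ge_atTop 0] with x hx
    rw [Real.norm_of_nonneg hx]
  · simpa using (f.continuous.tendsto 0).isBigO_one ℝ |>.mono nhdsWithin_le_nhds

/-- The Mellin transform at a point `s` of the right half-plane, as a linear functional on
Schwartz functions. -/
def schwartzMellin (E : Type*) [NormedAddCommGroup E] [NormedSpace ℂ E] {s : ℂ}
    (hs : 0 < s.re) : 𝓢(ℝ, E) →ₗ[ℝ] E where
  toFun f := mellin f s
  map_add' f g :=
    (hasMellin_add (mellinConvergent_schwartzMap f hs) (mellinConvergent_schwartzMap g hs)).2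
  map_smul' c f := mellin_const_smul f s c

theorem schwartzMellin_dilation {s : ℂ} (hs : 0 < s.re) {q : ℝ} (hq : 0 < q) (f : 𝓢(ℝ, E)) :
    schwartzMellin E hs (dilation E hq.ne' f) = ((q⁻¹ : ℝ) : ℂ) ^ (-s) • schwartzMellin E hs f :=
  mellin_comp_mul_right f s (inv_pos.2 hq)

theorem mellin_ofReal_add_one (f : ℝ → E) (lam : ℝ) :
    mellin f (lam + 1) = ∫ ϱ in Set.Ioi (0 : ℝ), ((ϱ ^ lam : ℝ) : ℂ) • f ϱ := by
  refine setIntegral_congr_fun measurableSet_Ioi fun ϱ hϱ => ?_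
  rw [add_sub_cancel_right, Complex.ofReal_cpow (le_of_lt hϱ)]

end MellinTransform

theorem coe_derivCLM_pow {E : Type*} [NormedAddCommGroup E] [NormedSpace ℝ E] (j : ℕ)
    (f : 𝓢(ℝ, E)) : ⇑((derivCLM ℝ E ^ j) f) = iteratedDeriv j f := by
  induction j with
  | zero => simp
  | succ j ih =>
    rw [iteratedDeriv_succ, ← ih, pow_succ']
    rfl

theorem derivCLM_pow_dilation {E : Type*} [NormedAddCommGroup E] [NormedSpace ℝ E] (j : ℕ)
    {q : ℝ} (hq : q ≠ 0) (f : 𝓢(ℝ, E)) :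
    (derivCLM ℝ E ^ j) (dilation E hq f) = (q ^ j)⁻¹ • dilation E hq ((derivCLM ℝ E ^ j) f) := by
  have hcomp : ⇑(dilation E hq f) = fun x => f (q⁻¹ * x) := by
    ext x
    rw [dilation_apply, div_eq_inv_mul]
  ext x
  rw [coe_derivCLM_pow, hcomp, iteratedDeriv_comp_const_smul (f.smooth j), inv_pow, smul_apply,
    dilation_apply, coe_derivCLM_pow, div_eq_inv_mul]

/-- The Fourier transform `FT1R` as a linear map on real Schwartz functions; Mathlib's `𝓕` has
frequency variable `ϱ / (2π)`. -/
def schwartzFT1R : 𝓢(ℝ, ℝ) →L[ℝ] 𝓢(ℝ, ℂ) :=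
  dilation ℂ Real.two_pi_pos.ne' ∘L fourierCLM ℝ 𝓢(ℝ, ℂ) ∘L postcompCLM Complex.ofRealCLM

theorem coe_schwartzFT1R (f : 𝓢(ℝ, ℝ)) : ⇑(schwartzFT1R f) = FT1R f := by
  ext ϱ
  change 𝓕 (fun s => (f s : ℂ)) (ϱ / (2 * Real.pi)) = FT1R f ϱ
  rw [Real.fourier_eq', FT1R, FT1]
  congr 1 with s
  rw [smul_eq_mul, mul_comm]
  congr 2
  simp only [RCLike.inner_apply, conj_trivial]
  push_cast
  field_simp

theorem FT1_comp_div (φ : ℝ → ℂ) {q : ℝ} (hq : q ≠ 0) (ϱ : ℝ) :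
    FT1 (fun s => φ (s / q)) ϱ = |q| • FT1 φ (q * ϱ) := by
  rw [FT1, FT1, ← Measure.integral_comp_div _ q]
  congr 1 with s
  have : (q : ℂ) ≠ 0 := Complex.ofReal_ne_zero.2 hq
  push_cast
  field_simp

theorem schwartzFT1R_dilation {q : ℝ} (hq : q ≠ 0) (f : 𝓢(ℝ, ℝ)) :
    schwartzFT1R (dilation ℝ hq f) = |q| • dilation ℂ (inv_ne_zero hq) (schwartzFT1R f) := by
  ext ϱ
  have h := FT1_comp_div (fun s => (f s : ℂ)) hq ϱ
  simpa [coe_schwartzFT1R, FT1R, mul_comm] using h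

/-- The moment `∫₀^∞ ϱ^λ (d/dϱ)^j Φ̂(ϱ) dϱ` as a linear functional of `Φ`, written as the Mellin
transform of `(d/dϱ)^j Φ̂` at `λ + 1`. -/
def fourierDerivMoment {lam : ℝ} (hlam : -1 < lam) (j : ℕ) : 𝓢(ℝ, ℝ) →ₗ[ℝ] ℂ :=
  schwartzMellin ℂ (s := lam + 1) (by simpa using neg_lt_iff_pos_add.1 hlam) ∘ₗ
    ((derivCLM ℝ ℂ ^ j) ∘L schwartzFT1R).toLinearMap

theorem fourierDerivMoment_apply {lam : ℝ} (hlam : -1 < lam) (j : ℕ) (Φ : 𝓢(ℝ, ℝ)) :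
    fourierDerivMoment hlam j Φ =
      ∫ ϱ in Set.Ioi (0 : ℝ), ((ϱ ^ lam : ℝ) : ℂ) * iteratedDeriv j (FT1R Φ) ϱ := by
  rw [← coe_schwartzFT1R, ← coe_derivCLM_pow]
  exact mellin_ofReal_add_one _ lam

theorem isHomogeneous_fourierDerivMoment {lam : ℝ} (hlam : -1 < lam) (j : ℕ) :
    IsHomogeneous (j - lam) (fourierDerivMoment hlam j) := by
  intro q hq f
  have hscale : ((q⁻¹⁻¹ : ℝ) : ℂ) ^ (-(lam + 1 : ℂ)) = ((q ^ (-(lam + 1)) : ℝ) : ℂ) := by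
    rw [inv_inv, Complex.ofReal_cpow hq.le]
    push_cast
    rfl
  have hexp : q * (q⁻¹ ^ j)⁻¹ * q ^ (-(lam + 1)) = q ^ (j - lam) := by
    rw [show (j : ℝ) - lam = 1 + j + -(lam + 1) by ring, Real.rpow_add hq, Real.rpow_add hq,
      Real.rpow_one, Real.rpow_natCast, inv_pow, inv_inv]
  simp only [fourierDerivMoment, LinearMap.comp_apply, ContinuousLinearMap.coe_coe,
    ContinuousLinearMap.comp_apply]
  rw [schwartzFT1R_dilation, map_smul, derivCLM_pow_dilation, map_smul, map_smul,
    schwartzMellin_dilation _ (inv_pos.2 hq), hscale, Complex.coe_smul, smul_smul, smul_smul,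
    abs_of_pos hq, hexp]

theorem exists_Phi_with_cancellation_general {lam : ℝ} (hlam : -1 < lam) {a : ℝ} (ha : 0 < a)
    (ha₁ : a < 1) (N0 : ℕ) :
    ∃ Φ : ℝ → ℝ, ContDiff ℝ (⊤ : ℕ∞) Φ ∧ HasCompactSupport Φ ∧
      (∀ s, Φ (-s) = Φ s) ∧ (∀ s : ℝ, |s| ≤ a → Φ s = 1) ∧
      (∀ s : ℝ, 1 ≤ |s| → Φ s = 0) ∧
      ∀ j : ℕ, j ≤ N0 → (j : ℝ) ≠ lam →
        (∫ ϱ in Set.Ioi (0:ℝ), ((ϱ ^ lam : ℝ) : ℂ) * iteratedDeriv j (FT1R Φ) ϱ) = 0 := by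
  obtain ⟨Φ, hΦ, hmoment⟩ := exists_isCutoff_forall_eq_zero (fourierDerivMoment hlam)
    (fun j => j - lam) {j ∈ Finset.range (N0 + 1) | (j : ℝ) ≠ lam}
    (fun j _ => isHomogeneous_fourierDerivMoment hlam j)
    (fun j hj => sub_ne_zero.2 (Finset.mem_filter.1 hj).2) ha ha₁
  refine ⟨Φ, Φ.smooth ⊤, hΦ.hasCompactSupport, hΦ.even, hΦ.eq_one, hΦ.eq_zero,
    fun j hj hne => ?_⟩
  rw [← fourierDerivMoment_apply hlam]
  exact hmoment j (Finset.mem_filter.2 ⟨Finset.mem_range_succ_iff.2 hj, hne⟩)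

/-- Existence of an even compactly supported smooth `Φ∘`, equal to `1`
on `[-1/2,1/2]`, vanishing off `(-1,1)`, with the moment cancellation conditions. -/
theorem exists_Phi_with_cancellation (lam : ℝ) (hlam : 0 < lam) (N0 : ℕ) :
    ∃ Φ : ℝ → ℝ, ContDiff ℝ (⊤ : ℕ∞) Φ ∧ HasCompactSupport Φ ∧
      (∀ s, Φ (-s) = Φ s) ∧ (∀ s : ℝ, |s| ≤ 1/2 → Φ s = 1) ∧
      (∀ s : ℝ, 1 ≤ |s| → Φ s = 0) ∧
      ∀ j : ℕ, j ≤ N0 → (j : ℝ) ≠ lam →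
        (∫ ϱ in Set.Ioi (0:ℝ), ((ϱ ^ lam : ℝ) : ℂ) * iteratedDeriv j (FT1R Φ) ϱ) = 0 :=
  exists_Phi_with_cancellation_general (by linarith) one_half_pos one_half_lt_one N0
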